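/- arXiv:2204.02783 — 2 statements merged into one kernel-verified Lean document; each statement's English description precedes it below -/
import Mathlib

section
/- Let ν ∈ (0,1) and define the relaxation response σ(t) = E_ν(−(log(1+t))^ν) = ∑_{k=0}^∞ (−(log(1+t))^ν)^k / Γ(νk+1). Then σ solves the fractional relaxation equation of the modified Maxwell model with E = θ = η₀ = 1: for every t > 0, (1/Γ(1−ν)) · ∫₀ᵗ (log((1+t)/(1+τ)))^{−ν} · σ′(τ) dτ = −σ(t). -/
open Real MeasureTheory Set

/-- The Mittag-Leffler function `E_ν(x) = ∑_{k=0}^∞ x^k / Γ(νk+1)`. -/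
noncomputable def mittagLeffler (ν x : ℝ) : ℝ :=
  ∑' k : ℕ, x ^ k / Real.Gamma (ν * k + 1)

/-! In the logarithmic time `u = log (1 + t)` the operator becomes the Caputo derivative of order
`ν`, that is, the Riemann–Liouville integral of order `1 - ν` of the ordinary derivative. Since
`E_ν' = E_{ν,ν} / ν`, the derivative of `E_ν(c u ^ ν)` is `c u ^ (ν - 1) E_{ν,ν}(c u ^ ν)`, and by
Euler's Beta integral, applied term by term, fractional integration of order `q` maps
`u ^ (β - 1) E_{ν,β}(c u ^ ν)` to `u ^ (β + q - 1) E_{ν,β+q}(c u ^ ν)`. With `β = ν` and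
`q = 1 - ν` this gives back `E_ν(c u ^ ν)`, so the latter is an eigenfunction of the Caputo
derivative with eigenvalue `c`; the theorem is the case `c = -1`. -/

section PowerSeries

variable {𝕜 : Type*} [RCLike 𝕜] {a : ℕ → 𝕜}

theorem hasDerivAt_tsum_mul_pow (ha : ∀ x, Summable fun k => a k * x ^ k) (x : 𝕜) :
    HasDerivAt (fun y => ∑' k, a k * y ^ k) (∑' k : ℕ, (k + 1) * a (k + 1) * x ^ k) x := by
  set r : ℝ := ‖x‖ + 1 with hr_def
  have hr : 1 ≤ r := by simp [hr_def]
  have hx : x ∈ Metric.ball (0 : 𝕜) r := by simp [hr_def]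
  have hu : Summable fun k => ‖a k * ((2 * r : ℝ) : 𝕜) ^ k‖ := (ha _).norm
  have hbound (k : ℕ) (y : 𝕜) (hy : y ∈ Metric.ball 0 r) :
      ‖a k * (k * y ^ (k - 1))‖ ≤ ‖a k * ((2 * r : ℝ) : 𝕜) ^ k‖ := by
    have hk : (k : ℝ) ≤ 2 ^ k := mod_cast Nat.lt_two_pow_self.le
    have hyk : ‖y‖ ^ (k - 1) ≤ r ^ k :=
      (pow_le_pow_left₀ (norm_nonneg y) (mem_ball_zero_iff.1 hy).le _).trans
        (pow_le_pow_right₀ hr (Nat.sub_le k 1))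
    rw [norm_mul, norm_mul, norm_mul, norm_pow, norm_pow, RCLike.norm_natCast,
      RCLike.norm_of_nonneg (by positivity), mul_pow]
    gcongr
  have hderiv := hasDerivAt_tsum_of_isPreconnected hu Metric.isOpen_ball
    (convex_ball (0 : 𝕜) r).isPreconnected
    (fun k y _ => (hasDerivAt_pow k y).const_mul (a k)) hbound hx (ha x) hx
  rw [(Summable.of_norm_bounded hu fun k => hbound k x hx).tsum_eq_zero_add] at hderiv
  refine hderiv.congr_deriv ?_
  simp only [Nat.cast_zero, zero_mul, mul_zero, zero_add, Nat.cast_add, Nat.cast_one,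
    Nat.add_sub_cancel]
  exact tsum_congr fun k => by ring

end PowerSeries

section MittagLeffler

/-- The two-parameter Mittag-Leffler function `E_{α,β}(x) = ∑_{k=0}^∞ x^k / Γ(αk+β)`, which
contains both `E_α = E_{α,1}` and its derivative `E_{α,α} / α`. Where `αk+β` is a pole of `Γ`,
the junk value `x / 0 = 0` gives the correct term, since `1 / Γ` vanishes there. -/
noncomputable def mittagLefflerTwo (α β x : ℝ) : ℝ :=
  ∑' k : ℕ, x ^ k / Real.Gamma (α * k + β)

theorem rpow_mul_exp_neg_le_Gamma {R s : ℝ} (hR : 0 < R) (hs : 1 ≤ s) :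
    R ^ (s - 1) * exp (-R) ≤ Real.Gamma s := by
  have hint := Real.GammaIntegral_convergent (zero_lt_one.trans_le hs)
  rw [Real.Gamma_eq_integral (zero_lt_one.trans_le hs), ← integral_exp_neg_Ioi R,
    ← integral_const_mul]
  calc ∫ x in Ioi R, R ^ (s - 1) * exp (-x)
      ≤ ∫ x in Ioi R, exp (-x) * x ^ (s - 1) := by
        refine setIntegral_mono_on ((integrableOn_exp_neg_Ioi R).const_mul _)
          (hint.mono_set (Ioi_subset_Ioi hR.le)) measurableSet_Ioi fun x hx => ?_
        rw [mul_comm]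
        gcongr
        exact (mem_Ioi.1 hx).le
    _ ≤ ∫ x in Ioi 0, exp (-x) * x ^ (s - 1) := by
        refine setIntegral_mono_set hint ?_ (Ioi_subset_Ioi hR.le).eventuallyLE
        exact (ae_restrict_mem measurableSet_Ioi).mono fun x hx =>
          mul_nonneg (exp_pos _).le (rpow_nonneg (mem_Ioi.1 hx).le _)

variable {α : ℝ}

theorem summable_pow_div_Gamma (hα : 0 < α) (β x : ℝ) :
    Summable fun k : ℕ => x ^ k / Real.Gamma (α * k + β) := by
  -- With this `R` the lower bound `R ^ (αk + β - 1) e ^ (-R)` for `Γ(αk + β)` outgrows `|x| ^ k`.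
  set R : ℝ := (|x| + 1) ^ α⁻¹
  have hR : 0 < R := by positivity
  have hRα : R ^ α = |x| + 1 := rpow_inv_rpow (by positivity) hα.ne'
  have hratio : |x| / (|x| + 1) < 1 := (div_lt_one (by positivity)).2 (lt_add_one _)
  refine Summable.of_norm_bounded_eventually_nat
    ((summable_geometric_of_lt_one (by positivity) hratio).mul_left (exp R * R ^ (1 - β))) ?_
  have hlarge : ∀ᶠ k : ℕ in Filter.atTop, 1 ≤ α * k + β :=
    (Filter.tendsto_atTop_add_const_right _ β
      (tendsto_natCast_atTop_atTop.const_mul_atTop hα)).eventually_ge_atTop 1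
  filter_upwards [hlarge] with k hk
  have hpow : R ^ (α * k + β - 1) = (|x| + 1) ^ k / R ^ (1 - β) := by
    rw [show α * k + β - 1 = α * k - (1 - β) by ring, rpow_sub hR, rpow_mul hR.le, hRα,
      rpow_natCast]
  calc ‖x ^ k / Real.Gamma (α * k + β)‖
      = |x| ^ k / Real.Gamma (α * k + β) := by
        rw [norm_div, norm_pow, norm_eq_abs,
          norm_of_nonneg (Real.Gamma_nonneg_of_nonneg (zero_le_one.trans hk))]
    _ ≤ |x| ^ k / (R ^ (α * k + β - 1) * exp (-R)) := by
        gcongr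
        exact rpow_mul_exp_neg_le_Gamma hR hk
    _ = exp R * R ^ (1 - β) * (|x| / (|x| + 1)) ^ k := by
        rw [hpow, exp_neg, div_pow]
        field_simp

theorem hasDerivAt_mittagLeffler (hα : 0 < α) (x : ℝ) :
    HasDerivAt (mittagLeffler α) (mittagLefflerTwo α α x / α) x := by
  have hseries : mittagLeffler α = fun y => ∑' k : ℕ, (Real.Gamma (α * k + 1))⁻¹ * y ^ k :=
    funext fun y => tsum_congr fun k => div_eq_inv_mul _ _
  rw [hseries, mittagLefflerTwo, ← tsum_div_const]
  refine (hasDerivAt_tsum_mul_pow (fun y => ?_) x).congr_deriv (tsum_congr fun k => ?_)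
  · simpa only [div_eq_inv_mul] using summable_pow_div_Gamma hα 1 y
  · have hΓ : Real.Gamma (α * k + α) ≠ 0 := (Real.Gamma_pos_of_pos (by positivity)).ne'
    push_cast
    rw [mul_add_one, Real.Gamma_add_one (by positivity)]
    field_simp [hΓ]

theorem hasDerivAt_mittagLeffler_const_mul_rpow (hα : 0 < α) (c : ℝ) {u : ℝ} (hu : 0 < u) :
    HasDerivAt (fun u => mittagLeffler α (c * u ^ α))
      (c * (u ^ (α - 1) * mittagLefflerTwo α α (c * u ^ α))) u := by
  have hinner := (hasDerivAt_rpow_const (p := α) (Or.inl hu.ne')).const_mul c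
  refine ((hasDerivAt_mittagLeffler hα (c * u ^ α)).comp u hinner).congr_deriv ?_
  field_simp

end MittagLeffler

section RiemannLiouville

/-- The Riemann–Liouville fractional integral of order `q` based at `0`. It is meant for `0 < q`
and `0 ≤ t`, where the kernel is integrable and `t - u` is nonnegative. -/
noncomputable def riemannLiouville (q : ℝ) (f : ℝ → ℝ) (t : ℝ) : ℝ :=
  1 / Real.Gamma q * ∫ u in (0 : ℝ)..t, (t - u) ^ (q - 1) * f u

theorem riemannLiouville_congr {q t : ℝ} {f g : ℝ → ℝ} (ht : 0 ≤ t) (hfg : EqOn f g (Ioc 0 t)) :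
    riemannLiouville q f t = riemannLiouville q g t := by
  simp only [riemannLiouville, intervalIntegral.integral_of_le ht]
  rw [setIntegral_congr_fun measurableSet_Ioc fun u hu => by rw [hfg hu]]

theorem riemannLiouville_const_mul (q c : ℝ) (f : ℝ → ℝ) (t : ℝ) :
    riemannLiouville q (fun u => c * f u) t = c * riemannLiouville q f t := by
  simp only [riemannLiouville, mul_left_comm _ c, intervalIntegral.integral_const_mul]

variable {p q t : ℝ}

theorem integral_sub_rpow_mul_rpow (hp : 0 < p) (hq : 0 < q) (ht : 0 < t) :
    ∫ u in (0 : ℝ)..t, (t - u) ^ (q - 1) * u ^ (p - 1)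
      = t ^ (p + q - 1) * ProbabilityTheory.beta p q := by
  have hcast : ((∫ u in (0 : ℝ)..t, (t - u) ^ (q - 1) * u ^ (p - 1) : ℝ) : ℂ)
      = ∫ u in (0 : ℝ)..t, (u : ℂ) ^ ((p : ℂ) - 1) * ((t : ℂ) - u) ^ ((q : ℂ) - 1) := by
    rw [← intervalIntegral.integral_ofReal, intervalIntegral.integral_of_le ht.le,
      intervalIntegral.integral_of_le ht.le]
    refine setIntegral_congr_fun measurableSet_Ioc fun u hu => ?_
    simp only [Complex.ofReal_mul, Complex.ofReal_cpow hu.1.le,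
      Complex.ofReal_cpow (sub_nonneg.2 hu.2), Complex.ofReal_sub, Complex.ofReal_one]
    exact mul_comm _ _
  have hbeta : Complex.betaIntegral p q = (ProbabilityTheory.beta p q : ℝ) := by
    rw [Complex.betaIntegral_eq_Gamma_mul_div _ _ (by simpa) (by simpa), ← Complex.ofReal_add]
    simp only [Complex.Gamma_ofReal, ProbabilityTheory.beta, Complex.ofReal_mul, Complex.ofReal_div]
  rw [← Complex.ofReal_inj, hcast, Complex.betaIntegral_scaled p q ht, hbeta, Complex.ofReal_mul,
    Complex.ofReal_cpow ht.le]
  push_cast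
  rfl

theorem intervalIntegrable_sub_rpow_mul_rpow (hp : 0 < p) (hq : 0 < q) (ht : 0 < t) :
    IntervalIntegrable (fun u => (t - u) ^ (q - 1) * u ^ (p - 1)) volume 0 t := by
  -- The integral of a non-integrable function is `0`, but the Beta integral is positive.
  refine not_imp_comm.1 intervalIntegral.integral_undef ?_
  rw [integral_sub_rpow_mul_rpow hp hq ht]
  exact (mul_pos (rpow_pos_of_pos ht _) (ProbabilityTheory.beta_pos hp hq)).ne'

theorem riemannLiouville_rpow (hp : 0 < p) (hq : 0 < q) (ht : 0 < t) :
    riemannLiouville q (fun u => u ^ (p - 1)) t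
      = Real.Gamma p / Real.Gamma (p + q) * t ^ (p + q - 1) := by
  have hΓ : Real.Gamma q ≠ 0 := (Real.Gamma_pos_of_pos hq).ne'
  rw [riemannLiouville, integral_sub_rpow_mul_rpow hp hq ht, ProbabilityTheory.beta]
  field_simp [hΓ]

theorem riemannLiouville_tsum_mul_rpow {ι : Type*} [Countable ι] {a s : ι → ℝ}
    (hs : ∀ i, 0 < s i) (hq : 0 < q) (ht : 0 < t)
    (ha : Summable fun i => a i * (Real.Gamma (s i) / Real.Gamma (s i + q) * t ^ (s i + q - 1))) :
    riemannLiouville q (fun u => ∑' i, a i * u ^ (s i - 1)) t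
      = ∑' i, a i * (Real.Gamma (s i) / Real.Gamma (s i + q) * t ^ (s i + q - 1)) := by
  have hΓ : Real.Gamma q ≠ 0 := (Real.Gamma_pos_of_pos hq).ne'
  have hterm (i : ι) (c : ℝ) : ∫ u in Ioc 0 t, c * ((t - u) ^ (q - 1) * u ^ (s i - 1))
      = Real.Gamma q * (c * (Real.Gamma (s i) / Real.Gamma (s i + q) * t ^ (s i + q - 1))) := by
    rw [← riemannLiouville_rpow (hs i) hq ht, riemannLiouville, integral_const_mul,
      intervalIntegral.integral_of_le ht.le]
    field_simp [hΓ]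
  have hint (i : ι) :
      IntegrableOn (fun u => a i * ((t - u) ^ (q - 1) * u ^ (s i - 1))) (Ioc 0 t) :=
    ((intervalIntegrable_sub_rpow_mul_rpow (hs i) hq ht).1).const_mul _
  have hnorm (i : ι) : ∫ u in Ioc 0 t, ‖a i * ((t - u) ^ (q - 1) * u ^ (s i - 1))‖
      = Real.Gamma q *
        ‖a i * (Real.Gamma (s i) / Real.Gamma (s i + q) * t ^ (s i + q - 1))‖ := by
    have hcoeff : 0 ≤ Real.Gamma (s i) / Real.Gamma (s i + q) * t ^ (s i + q - 1) := by
      have := Real.Gamma_pos_of_pos (hs i)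
      have := Real.Gamma_pos_of_pos (add_pos (hs i) hq)
      positivity
    rw [norm_mul, norm_of_nonneg hcoeff, ← hterm]
    refine setIntegral_congr_fun measurableSet_Ioc fun u hu => ?_
    simp only [norm_mul, norm_of_nonneg (rpow_nonneg (sub_nonneg.2 hu.2) _),
      norm_of_nonneg (rpow_nonneg hu.1.le _)]
  have hswap := integral_tsum_of_summable_integral_norm hint
    ((ha.norm.mul_left (Real.Gamma q)).congr fun i => (hnorm i).symm)
  simp only [hterm, tsum_mul_left] at hswap
  simp only [riemannLiouville, intervalIntegral.integral_of_le ht.le, ← tsum_mul_left,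
    mul_left_comm _ (a _)]
  rw [← hswap]
  field_simp [hΓ]

theorem riemannLiouville_rpow_mul_mittagLefflerTwo {α β : ℝ} (hα : 0 < α) (hβ : 0 < β)
    (hq : 0 < q) (c : ℝ) (ht : 0 < t) :
    riemannLiouville q (fun u => u ^ (β - 1) * mittagLefflerTwo α β (c * u ^ α)) t
      = t ^ (β + q - 1) * mittagLefflerTwo α (β + q) (c * t ^ α) := by
  have hΓ (k : ℕ) : 0 < Real.Gamma (α * k + β) := Real.Gamma_pos_of_pos (by positivity)
  have hrpow {u : ℝ} (hu : 0 < u) (γ : ℝ) (k : ℕ) :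
      u ^ (α * k + γ - 1) = u ^ (γ - 1) * (u ^ α) ^ k := by
    rw [add_sub_assoc, add_comm, rpow_add hu, rpow_mul hu.le, rpow_natCast]
  have hseries : EqOn (fun u => u ^ (β - 1) * mittagLefflerTwo α β (c * u ^ α))
      (fun u => ∑' k : ℕ, c ^ k / Real.Gamma (α * k + β) * u ^ (α * k + β - 1)) (Ioc 0 t) := by
    intro u hu
    simp only [mittagLefflerTwo, ← tsum_mul_left]
    exact tsum_congr fun k => by rw [hrpow hu.1, mul_pow]; ring
  have hterm (k : ℕ) : t ^ (β + q - 1) * ((c * t ^ α) ^ k / Real.Gamma (α * k + (β + q)))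
      = c ^ k / Real.Gamma (α * k + β) * (Real.Gamma (α * k + β) / Real.Gamma (α * k + β + q) *
          t ^ (α * k + β + q - 1)) := by
    have := hΓ k
    rw [add_assoc (α * k), hrpow ht, mul_pow]
    field_simp
  rw [riemannLiouville_congr ht.le hseries,
    riemannLiouville_tsum_mul_rpow (fun k => by positivity) hq ht
      (((summable_pow_div_Gamma hα (β + q) _).mul_left _).congr hterm),
    mittagLefflerTwo, ← tsum_mul_left]
  exact (tsum_congr hterm).symm

theorem riemannLiouville_deriv_mittagLeffler {ν : ℝ} (hν : ν ∈ Ioo 0 1) (c : ℝ) (ht : 0 < t) :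
    riemannLiouville (1 - ν) (deriv fun u => mittagLeffler ν (c * u ^ ν)) t
      = c * mittagLeffler ν (c * t ^ ν) := by
  rw [riemannLiouville_congr ht.le fun u hu =>
      (hasDerivAt_mittagLeffler_const_mul_rpow hν.1 c hu.1).deriv,
    riemannLiouville_const_mul,
    riemannLiouville_rpow_mul_mittagLefflerTwo hν.1 hν.1 (sub_pos.2 hν.2) c ht]
  simp only [add_sub_cancel, sub_self, rpow_zero, one_mul, mittagLefflerTwo, mittagLeffler]

end RiemannLiouville

section LogTime

theorem integral_log_div_mul_deriv_comp_log {f : ℝ → ℝ} {t : ℝ} (ht : 0 ≤ t)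
    (hf : ∀ u, 0 < u → DifferentiableAt ℝ f u) (K : ℝ → ℝ) :
    ∫ τ in (0 : ℝ)..t, K (log ((1 + t) / (1 + τ))) * deriv (fun s => f (log (1 + s))) τ
      = ∫ u in (0 : ℝ)..log (1 + t), K (log (1 + t) - u) * deriv f u := by
  have hlog {τ : ℝ} (hτ : 0 ≤ τ) : HasDerivAt (fun s => log (1 + s)) (1 + τ)⁻¹ τ := by
    simpa using! ((hasDerivAt_id τ).const_add 1).log (by simp only [id]; positivity)
  have hchain {τ : ℝ} (hτ : 0 < τ) : deriv (fun s => f (log (1 + s))) τ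
      = deriv f (log (1 + τ)) * (1 + τ)⁻¹ :=
    ((hf _ (log_pos (lt_add_of_pos_right 1 hτ))).hasDerivAt.comp τ (hlog hτ.le)).deriv
  calc ∫ τ in (0 : ℝ)..t, K (log ((1 + t) / (1 + τ))) * deriv (fun s => f (log (1 + s))) τ
      = ∫ τ in (0 : ℝ)..t,
          ((fun u => K (log (1 + t) - u) * deriv f u) ∘ fun s => log (1 + s)) τ * (1 + τ)⁻¹ := by
        rw [intervalIntegral.integral_of_le ht, intervalIntegral.integral_of_le ht]
        refine setIntegral_congr_fun measurableSet_Ioc fun τ hτ => ?_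
        have := hτ.1
        simp only [Function.comp_apply]
        rw [hchain hτ.1, log_div (by positivity) (by positivity), mul_assoc]
    _ = ∫ u in log (1 + 0)..log (1 + t), K (log (1 + t) - u) * deriv f u := by
        apply intervalIntegral.integral_comp_mul_deriv_of_deriv_nonneg
        · rw [uIcc_of_le ht]
          exact fun τ hτ => (hlog hτ.1).continuousAt.continuousWithinAt
        · rw [min_eq_left ht]
          exact fun τ hτ => hlog hτ.1.le
        · rw [min_eq_left ht]
          exact fun τ hτ => inv_nonneg.2 (add_nonneg zero_le_one hτ.1.le)
    _ = ∫ u in (0 : ℝ)..log (1 + t), K (log (1 + t) - u) * deriv f u := by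
        rw [add_zero, log_one]

end LogTime

/-- The relaxation response `σ(t) = E_ν(−(log(1+t))^ν)` solves the
fractional relaxation equation of the modified Maxwell model with `E = θ = η₀ = 1`. -/
theorem relaxation_response_solves_fractional_maxwell (ν : ℝ)
    (hν : ν ∈ Set.Ioo (0:ℝ) 1) (σ : ℝ → ℝ)
    (hσ : σ = fun t : ℝ => mittagLeffler ν (-(Real.log (1 + t)) ^ ν)) :
    ∀ t : ℝ, 0 < t →
      (1 / Real.Gamma (1 - ν)) *
        ∫ τ in (0:ℝ)..t,
          (Real.log ((1 + t) / (1 + τ))) ^ (-ν) * deriv σ τ = -σ t := by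
  intro t ht
  set f : ℝ → ℝ := fun u => mittagLeffler ν (-1 * u ^ ν) with hf_def
  have hσf : σ = fun s => f (log (1 + s)) := by simp only [hσ, hf_def, neg_one_mul]
  have hf (u : ℝ) (hu : 0 < u) : DifferentiableAt ℝ f u :=
    (hasDerivAt_mittagLeffler_const_mul_rpow hν.1 (-1) hu).differentiableAt
  calc (1 / Real.Gamma (1 - ν)) *
        ∫ τ in (0:ℝ)..t, (log ((1 + t) / (1 + τ))) ^ (-ν) * deriv σ τ
      = riemannLiouville (1 - ν) (deriv f) (log (1 + t)) := by
        rw [hσf, integral_log_div_mul_deriv_comp_log ht.le hf (· ^ (-ν)), riemannLiouville,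
          sub_sub_cancel_left]
    _ = -1 * f (log (1 + t)) :=
        riemannLiouville_deriv_mittagLeffler hν (-1) (log_pos (lt_add_of_pos_right 1 ht))
    _ = -σ t := by rw [hσf, neg_one_mul]
end

section
/- (Pollard) For every ν ∈ (0,1), the function x ↦ E_ν(−x) is completely monotone on (0,∞): it is infinitely differentiable on (0,∞) and for every integer n ≥ 0 and every x > 0, (−1)^n · (dⁿ/dxⁿ) E_ν(−x) ≥ 0. -/
open Real Set

/-!
Euler's product writes `1 / Γ(s + 1)` as the limit of `∏ i < k, (1 + s / (i + 1)) * k ^ (-s)`,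
which for `s ≥ 0` is a decreasing sequence. For `s = ν * j` the factor `k ^ (-s)` only rescales the
variable of the power series. Multiplying the coefficients by `1 + c * j` with `c * (k + 1) ≤ 1`
maps nonnegative combinations of the rising factorials `j ↦ (j + 1) ⋯ (j + m)`, `m ≤ k`, to such
combinations with `m ≤ k + 1`, because `1 + c * j = (1 - c * (m + 1)) + c * (j + m + 1)`. Hence the
approximating power series are nonnegative combinations of the functions `(1 - r)⁻¹ ^ (m + 1)`, all
of whose derivatives are nonnegative for `r < 1`. By dominated convergence every derivative of `E_ν`
is nonnegative on the whole real line.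
-/

open Filter Asymptotics
open scoped Topology

section EntirePowerSeries

variable {𝕜 : Type*} [NontriviallyNormedField 𝕜] {a : ℕ → 𝕜} {f : 𝕜 → 𝕜}

theorem hasFPowerSeriesOnBall_top_of_hasSum_pow (hf : ∀ x, HasSum (fun j ↦ a j * x ^ j) (f x)) :
    HasFPowerSeriesOnBall f (.ofScalars 𝕜 a) 0 ⊤ where
  r_le := by
    refine top_le_iff.2 (ENNReal.eq_top_of_forall_nnreal_le fun R ↦ ?_)
    obtain ⟨x, hx⟩ := NormedField.exists_lt_norm 𝕜 R
    refine le_trans (ENNReal.coe_le_coe.2 hx.le)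
      (FormalMultilinearSeries.le_radius_of_tendsto (r := ‖x‖₊) _ (l := 0) ?_)
    simpa [FormalMultilinearSeries.ofScalars_norm] using (hf x).summable.tendsto_atTop_zero.norm
  r_pos := ENNReal.zero_lt_top
  hasSum {x} _ := by
    simpa [FormalMultilinearSeries.ofScalars_apply_eq, mul_comm] using hf x

variable [CompleteSpace 𝕜]

theorem contDiff_of_hasSum_pow (hf : ∀ x, HasSum (fun j ↦ a j * x ^ j) (f x))
    {n : WithTop ℕ∞} : ContDiff 𝕜 n f := by
  have analytic := (hasFPowerSeriesOnBall_top_of_hasSum_pow hf).analyticOnNhd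
  rw [Metric.eball_top] at analytic
  exact analytic.contDiff

theorem hasSum_pow_deriv (hf : ∀ x, HasSum (fun j ↦ a j * x ^ j) (f x)) (x : 𝕜) :
    HasSum (fun j : ℕ ↦ (j + 1) * a (j + 1) * x ^ j) (deriv f x) := by
  have hsum := ((hasFPowerSeriesOnBall_top_of_hasSum_pow hf).fderiv.hasSum (y := x) (by simp)).mapL
    (ContinuousLinearMap.apply 𝕜 𝕜 1)
  simpa [FormalMultilinearSeries.apply_eq_pow_smul_coeff, mul_comm] using hsum

theorem hasSum_pow_iteratedDeriv (hf : ∀ x, HasSum (fun j ↦ a j * x ^ j) (f x)) (n : ℕ) (x : 𝕜) :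
    HasSum (fun j : ℕ ↦ (j + 1).ascFactorial n * a (j + n) * x ^ j) (iteratedDeriv n f x) := by
  induction n generalizing x with
  | zero => simpa using hf x
  | succ n ih =>
    rw [iteratedDeriv_succ]
    refine (hasSum_pow_deriv ih x).congr_fun fun j ↦ ?_
    have shift : ((j + 1).ascFactorial (n + 1) : 𝕜) = (j + 1) * (j + 1 + 1).ascFactorial n := by
      rw [Nat.ascFactorial_succ, ← Nat.succ_ascFactorial]
      push_cast
      rfl
    rw [shift, ← add_assoc, add_right_comm j 1 n]
    ring

end EntirePowerSeries

section RisingFactorials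

theorem hasSum_ascFactorial_mul_geometric {𝕜 : Type*} [NormedDivisionRing 𝕜] [CompleteSpace 𝕜]
    (m : ℕ) {r : 𝕜} (hr : ‖r‖ < 1) :
    HasSum (fun j ↦ ((j + 1).ascFactorial m : 𝕜) * r ^ j) (m.factorial / (1 - r) ^ (m + 1)) := by
  convert! (hasSum_choose_mul_geometric_of_norm_lt_one m hr).mul_left (m.factorial : 𝕜) using 1
  · ext j
    rw [Nat.ascFactorial_eq_factorial_mul_choose, Nat.cast_mul, mul_assoc]
  · rw [mul_one_div]

/-- The convex cone of sequences spanned by the rising factorials `j ↦ (j + 1) ⋯ (j + m)` with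
`m ≤ k`. For `ν ∈ [0, 1]` it contains Euler's product with `k` factors at `s = ν * j`. -/
def risingFactorialCone (k : ℕ) : PointedCone ℝ (ℕ → ℝ) :=
  PointedCone.hull ℝ ((fun m j ↦ ((j + 1).ascFactorial m : ℝ)) '' Iic k)

namespace risingFactorialCone

theorem ascFactorial_mem {m k : ℕ} (hm : m ≤ k) :
    (fun j ↦ ((j + 1).ascFactorial m : ℝ)) ∈ risingFactorialCone k :=
  PointedCone.subset_hull ⟨m, hm, rfl⟩

theorem affine_mul_mem {k : ℕ} {c : ℝ} (hc : 0 ≤ c) (hck : c * (k + 1) ≤ 1) {f : ℕ → ℝ}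
    (hf : f ∈ risingFactorialCone k) :
    (fun j : ℕ ↦ 1 + c * (j : ℝ)) * f ∈ risingFactorialCone (k + 1) := by
  induction hf using Submodule.span_induction with
  | mem f hf =>
    obtain ⟨m, hm, rfl⟩ := hf
    have hmk : (m : ℝ) ≤ k := Nat.cast_le.2 hm
    have weight_nonneg : 0 ≤ 1 - c * (m + 1) := by
      rw [sub_nonneg]
      exact le_trans (by gcongr) hck
    have split : (fun j : ℕ ↦ 1 + c * (j : ℝ)) * (fun j ↦ ((j + 1).ascFactorial m : ℝ)) =
        (1 - c * (m + 1)) • (fun j ↦ ((j + 1).ascFactorial m : ℝ)) +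
          c • (fun j ↦ ((j + 1).ascFactorial (m + 1) : ℝ)) := by
      ext j
      simp only [Pi.mul_apply, Pi.add_apply, Pi.smul_apply, smul_eq_mul, Nat.ascFactorial_succ]
      push_cast
      ring
    rw [split]
    exact add_mem
      (PointedCone.smul_mem _ weight_nonneg (ascFactorial_mem (hm.trans k.le_succ)))
      (PointedCone.smul_mem _ hc (ascFactorial_mem (Nat.succ_le_succ hm)))
  | zero => simp only [mul_zero, zero_mem]
  | add f g _ _ hf hg => simpa only [mul_add] using add_mem hf hg
  | smul b f _ hf => simpa only [mul_smul_comm] using Submodule.smul_mem _ b hf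

theorem prod_mem {ν : ℝ} (hν : ν ∈ Icc 0 1) (k : ℕ) :
    (fun j : ℕ ↦ ∏ i ∈ Finset.range k, (1 + ν * j / (i + 1))) ∈ risingFactorialCone k := by
  induction k with
  | zero => simpa using ascFactorial_mem (le_refl 0)
  | succ k ih =>
    have hk : (0 : ℝ) < k + 1 := by positivity
    have hstep := affine_mul_mem (c := ν / (k + 1)) (div_nonneg hν.1 hk.le)
      (by rw [div_mul_cancel₀ _ hk.ne']; exact hν.2) ih
    convert! hstep using 1
    ext j
    rw [Finset.prod_range_succ, Pi.mul_apply]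
    ring

theorem exists_nonneg_hasSum {k : ℕ} {f : ℕ → ℝ} (hf : f ∈ risingFactorialCone k) (n : ℕ) {r : ℝ}
    (hr : |r| < 1) :
    ∃ s ≥ 0, HasSum (fun j ↦ (j + 1).ascFactorial n * f (j + n) * r ^ j) s := by
  induction hf using Submodule.span_induction with
  | mem f hf =>
    obtain ⟨m, -, rfl⟩ := hf
    have one_sub_pos : 0 < 1 - r := sub_pos.2 (abs_lt.1 hr).2
    refine ⟨(n + m).factorial / (1 - r) ^ (n + m + 1), by positivity,
      (hasSum_ascFactorial_mul_geometric (n + m) hr).congr_fun fun j ↦ ?_⟩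
    rw [← Nat.ascFactorial_mul_ascFactorial, add_right_comm j 1 n, Nat.cast_mul]
  | zero => exact ⟨0, le_rfl, by simp⟩
  | add f g _ _ hf hg =>
    obtain ⟨s, hs, hfs⟩ := hf
    obtain ⟨t, ht, hgt⟩ := hg
    refine ⟨s + t, add_nonneg hs ht, (hfs.add hgt).congr_fun fun j ↦ ?_⟩
    rw [Pi.add_apply, mul_add, add_mul]
  | smul b f _ hf =>
    obtain ⟨s, hs, hfs⟩ := hf
    refine ⟨b * s, mul_nonneg b.2 hs, (hfs.mul_left (b : ℝ)).congr_fun fun j ↦ ?_⟩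
    change _ * ((b : ℝ) * f (j + n)) * _ = _
    ring

end risingFactorialCone

end RisingFactorials

section InvGamma

theorem one_add_div_le_rpow {s t : ℝ} (hs : 0 ≤ s) (ht : 0 < t) :
    1 + s / (t + 1) ≤ ((t + 1) / t) ^ s := by
  have hlog : 1 / (t + 1) ≤ Real.log ((t + 1) / t) := by
    refine le_of_eq_of_le ?_ (Real.one_sub_inv_le_log_of_pos (by positivity))
    field_simp
    ring
  calc 1 + s / (t + 1) = 1 / (t + 1) * s + 1 := by ring
    _ ≤ Real.log ((t + 1) / t) * s + 1 := by gcongr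
    _ ≤ Real.exp (Real.log ((t + 1) / t) * s) := Real.add_one_le_exp _
    _ = ((t + 1) / t) ^ s := (Real.rpow_def_of_pos (by positivity) s).symm

/-- Euler's approximants `(1 + s) (1 + s / 2) ⋯ (1 + s / k) * k ^ (-s)` of `1 / Γ(s + 1)`. They are
the inverses of `s * Real.GammaSeq s k`, in a form which also makes sense at `s = 0`. -/
noncomputable def invGammaSeq (s : ℝ) (k : ℕ) : ℝ :=
  (∏ i ∈ Finset.range k, (1 + s / (i + 1))) * (k : ℝ) ^ (-s)

namespace invGammaSeq

theorem nonneg {s : ℝ} (hs : 0 ≤ s) (k : ℕ) : 0 ≤ invGammaSeq s k := by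
  unfold invGammaSeq
  positivity

theorem eq_inv_mul_GammaSeq {s : ℝ} (hs : s ≠ 0) {k : ℕ} (hk : k ≠ 0) :
    invGammaSeq s k = (s * Real.GammaSeq s k)⁻¹ := by
  have hprod : ∏ i ∈ Finset.range (k + 1), (s + (i : ℝ)) =
      s * (k.factorial * ∏ i ∈ Finset.range k, (1 + s / (i + 1))) := by
    rw [Finset.prod_range_succ', mul_comm, Nat.cast_zero, add_zero,
      ← Finset.prod_range_add_one_eq_factorial, Nat.cast_prod, ← Finset.prod_mul_distrib]
    congr! 2 with i
    push_cast
    field_simp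
    ring
  have hpow : (k : ℝ) ^ s ≠ 0 := (Real.rpow_pos_of_pos (by positivity) s).ne'
  rw [Real.GammaSeq, hprod, invGammaSeq, Real.rpow_neg k.cast_nonneg]
  field_simp

theorem tendsto_inv_Gamma {s : ℝ} (hs : -1 < s) :
    Tendsto (invGammaSeq s) atTop (𝓝 (Real.Gamma (s + 1))⁻¹) := by
  rcases eq_or_ne s 0 with rfl | hs0
  · simp [funext fun k ↦ show invGammaSeq 0 k = 1 by simp [invGammaSeq]]
  have hΓ : s * Real.Gamma s ≠ 0 := by
    rw [← Real.Gamma_add_one hs0]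
    exact (Real.Gamma_pos_of_pos (by linarith)).ne'
  rw [Real.Gamma_add_one hs0]
  refine (((Real.GammaSeq_tendsto_Gamma s).const_mul s).inv₀ hΓ).congr' ?_
  filter_upwards [eventually_ne_atTop 0] with k hk
  exact (eq_inv_mul_GammaSeq hs0 hk).symm

theorem succ_le {s : ℝ} (hs : 0 ≤ s) {k : ℕ} (hk : k ≠ 0) :
    invGammaSeq s (k + 1) ≤ invGammaSeq s k := by
  have hk0 : (0 : ℝ) < k := by positivity
  rw [invGammaSeq, invGammaSeq, Finset.prod_range_succ, mul_assoc]
  gcongr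
  calc (1 + s / (k + 1)) * ((k + 1 : ℕ) : ℝ) ^ (-s)
      ≤ ((k + 1) / k : ℝ) ^ s * ((k + 1 : ℕ) : ℝ) ^ (-s) := by
        gcongr
        exact one_add_div_le_rpow hs hk0
    _ = (k : ℝ) ^ (-s) := by
        push_cast
        rw [Real.div_rpow (by positivity) hk0.le, Real.rpow_neg (by positivity),
          Real.rpow_neg hk0.le]
        field_simp

theorem antitoneOn {s : ℝ} (hs : 0 ≤ s) : AntitoneOn (invGammaSeq s) (Ici 1) := by
  intro k hk l _ hkl
  induction l, hkl using Nat.le_induction with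
  | base => exact le_rfl
  | succ l hl ih =>
    have hl1 : 1 ≤ l := le_trans hk hl
    exact (succ_le hs (by lia)).trans (ih hl1)

theorem inv_Gamma_le {s : ℝ} (hs : 0 ≤ s) {k : ℕ} (hk : k ≠ 0) :
    (Real.Gamma (s + 1))⁻¹ ≤ invGammaSeq s k := by
  refine le_of_tendsto (tendsto_inv_Gamma (by linarith)) ?_
  filter_upwards [eventually_ge_atTop k] with l hl
  have hk1 : 1 ≤ k := Nat.one_le_iff_ne_zero.2 hk
  exact antitoneOn hs hk1 (hk1.trans hl) hl

theorem mul_pow_eq (ν : ℝ) {k : ℕ} (hk : k ≠ 0) (n j : ℕ) (x : ℝ) :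
    invGammaSeq (ν * (j + n : ℕ)) k * x ^ j = (k : ℝ) ^ (-(ν * n)) *
      ((∏ i ∈ Finset.range k, (1 + ν * (j + n : ℕ) / (i + 1))) * (x / (k : ℝ) ^ ν) ^ j) := by
  have hk0 : (0 : ℝ) < k := by positivity
  have hpow : (k : ℝ) ^ (-(ν * (j + n : ℕ))) = (k : ℝ) ^ (-(ν * n)) * (((k : ℝ) ^ ν) ^ j)⁻¹ := by
    rw [← Real.rpow_mul_natCast hk0.le, ← Real.rpow_neg hk0.le, ← Real.rpow_add hk0]
    push_cast
    ring_nf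
  rw [invGammaSeq, hpow, div_pow]
  ring

end invGammaSeq

end InvGamma

section MittagLeffler

variable {ν : ℝ}

theorem eventually_ne_zero_and_lt_natCast_rpow (hν : 0 < ν) (R : ℝ) :
    ∀ᶠ k : ℕ in atTop, k ≠ 0 ∧ R < (k : ℝ) ^ ν :=
  (eventually_ne_atTop 0).and
    (((tendsto_rpow_atTop hν).comp tendsto_natCast_atTop_atTop).eventually_gt_atTop R)

theorem abs_div_natCast_rpow_lt_one {k : ℕ} {x : ℝ} (hx : |x| < (k : ℝ) ^ ν) :
    |x / (k : ℝ) ^ ν| < 1 := by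
  have hpos : 0 < (k : ℝ) ^ ν := (abs_nonneg x).trans_lt hx
  rwa [abs_div, abs_of_pos hpos, div_lt_one hpos]

theorem summable_invGammaSeq_mul_pow {k : ℕ} (hk : k ≠ 0) {x : ℝ} (hx : |x| < (k : ℝ) ^ ν) :
    Summable fun j : ℕ ↦ invGammaSeq (ν * j) k * x ^ j := by
  have prod_isBigO : (fun j : ℕ ↦ ∏ i ∈ Finset.range k, (1 + ν * j / (i + 1))) =O[atTop]
      fun j : ℕ ↦ (j : ℝ) ^ k := by
    have factor_isBigO (i : ℕ) :
        (fun j : ℕ ↦ 1 + ν * j / ((i : ℝ) + 1)) =O[atTop] fun j : ℕ ↦ (j : ℝ) := by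
      refine (isLittleO_const_left.2 (.inr ?_)).isBigO.add ?_
      · exact tendsto_norm_atTop_atTop.comp tendsto_natCast_atTop_atTop
      · simpa only [mul_div_right_comm] using isBigO_const_mul_self (ν / ((i : ℝ) + 1)) _ _
    simpa using IsBigO.finsetProd (s := Finset.range k) fun i _ ↦ factor_isBigO i
  have hsum : Summable fun j : ℕ ↦
      (∏ i ∈ Finset.range k, (1 + ν * j / (i + 1))) * (x / (k : ℝ) ^ ν) ^ j :=
    summable_of_isBigO_nat
      (summable_pow_mul_geometric_of_norm_lt_one k (abs_div_natCast_rpow_lt_one hx))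
      (prod_isBigO.mul (isBigO_refl _ _))
  refine hsum.congr fun j ↦ ?_
  simpa using (invGammaSeq.mul_pow_eq ν hk 0 j x).symm

theorem hasSum_mittagLeffler (hν : 0 < ν) (x : ℝ) :
    HasSum (fun j : ℕ ↦ (Real.Gamma (ν * j + 1))⁻¹ * x ^ j) (mittagLeffler ν x) := by
  obtain ⟨k, hk, hxk⟩ := (eventually_ne_zero_and_lt_natCast_rpow hν |x|).exists
  have hsum : Summable fun j : ℕ ↦ (Real.Gamma (ν * j + 1))⁻¹ * x ^ j := by
    refine (summable_invGammaSeq_mul_pow hk (by rwa [abs_abs])).of_norm_bounded fun j ↦ ?_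
    have hΓ : 0 < Real.Gamma (ν * j + 1) := Real.Gamma_pos_of_pos (by positivity)
    rw [norm_mul, norm_pow, Real.norm_eq_abs, Real.norm_eq_abs, abs_of_pos (inv_pos.2 hΓ)]
    gcongr
    exact invGammaSeq.inv_Gamma_le (by positivity) hk
  simpa only [mittagLeffler, div_eq_inv_mul] using hsum.hasSum

theorem exists_nonneg_hasSum_invGammaSeq (hν : ν ∈ Icc 0 1) {k : ℕ} (hk : k ≠ 0) {x : ℝ}
    (hx : |x| < (k : ℝ) ^ ν) (n : ℕ) :
    ∃ s ≥ 0, HasSum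
      (fun j ↦ (j + 1).ascFactorial n * invGammaSeq (ν * (j + n : ℕ)) k * x ^ j) s := by
  obtain ⟨s, hs, hsum⟩ := risingFactorialCone.exists_nonneg_hasSum
    (risingFactorialCone.prod_mem hν k) n (abs_div_natCast_rpow_lt_one hx)
  refine ⟨(k : ℝ) ^ (-(ν * n)) * s, by positivity, (hsum.mul_left _).congr_fun fun j ↦ ?_⟩
  rw [mul_assoc, invGammaSeq.mul_pow_eq ν hk]
  ring

theorem tendsto_tsum_invGammaSeq (hν : ν ∈ Ioc 0 1) (n : ℕ) (x : ℝ) :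
    Tendsto
      (fun k ↦ ∑' j : ℕ, (j + 1).ascFactorial n * invGammaSeq (ν * (j + n : ℕ)) k * x ^ j) atTop
      (𝓝 (iteratedDeriv n (mittagLeffler ν) x)) := by
  obtain ⟨hν0, hν1⟩ := hν
  obtain ⟨K, hK, hxK⟩ := (eventually_ne_zero_and_lt_natCast_rpow hν0 |x|).exists
  obtain ⟨_, -, hbound⟩ :=
    exists_nonneg_hasSum_invGammaSeq ⟨hν0.le, hν1⟩ hK (x := |x|) (by rwa [abs_abs]) n
  rw [← (hasSum_pow_iteratedDeriv (hasSum_mittagLeffler hν0) n x).tsum_eq]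
  refine tendsto_tsum_of_dominated_convergence hbound.summable (fun j ↦ ?_) ?_
  · have hs : -1 < ν * (j + n : ℕ) := neg_one_lt_zero.trans_le (by positivity)
    exact ((invGammaSeq.tendsto_inv_Gamma hs).const_mul _).mul_const _
  · filter_upwards [eventually_ge_atTop K] with k hk j
    have hs : 0 ≤ ν * (j + n : ℕ) := by positivity
    have hK1 : 1 ≤ K := Nat.one_le_iff_ne_zero.2 hK
    rw [norm_mul, norm_mul, norm_pow, Real.norm_natCast,
      Real.norm_of_nonneg (invGammaSeq.nonneg hs k), Real.norm_eq_abs]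
    gcongr
    exact invGammaSeq.antitoneOn hs hK1 (hK1.trans hk) hk

theorem iteratedDeriv_mittagLeffler_nonneg (hν : ν ∈ Ioc 0 1) (n : ℕ) (x : ℝ) :
    0 ≤ iteratedDeriv n (mittagLeffler ν) x := by
  refine ge_of_tendsto (tendsto_tsum_invGammaSeq hν n x) ?_
  filter_upwards [eventually_ne_zero_and_lt_natCast_rpow hν.1 |x|] with k ⟨hk, hxk⟩
  obtain ⟨s, hs, hsum⟩ := exists_nonneg_hasSum_invGammaSeq (Ioc_subset_Icc_self hν) hk hxk n
  rwa [hsum.tsum_eq]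

theorem contDiff_mittagLeffler (hν : 0 < ν) {n : WithTop ℕ∞} : ContDiff ℝ n (mittagLeffler ν) :=
  contDiff_of_hasSum_pow (hasSum_mittagLeffler hν)

end MittagLeffler

theorem mittagLeffler_completely_monotone_general (ν : ℝ) (hν : ν ∈ Ioc 0 1) :
    ContDiff ℝ (⊤ : ℕ∞) (fun x : ℝ ↦ mittagLeffler ν (-x)) ∧
    ∀ (n : ℕ) (x : ℝ),
      0 ≤ (-1 : ℝ) ^ n * iteratedDeriv n (fun x : ℝ ↦ mittagLeffler ν (-x)) x := by
  refine ⟨(contDiff_mittagLeffler hν.1).comp contDiff_neg, fun n x ↦ ?_⟩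
  rw [iteratedDeriv_comp_neg, smul_eq_mul, ← mul_assoc, ← mul_pow, neg_one_mul, neg_neg, one_pow,
    one_mul]
  exact iteratedDeriv_mittagLeffler_nonneg hν n (-x)

/-- Pollard: For `ν ∈ (0,1)`, `x ↦ E_ν(−x)` is completely monotone
on `(0,∞)`: infinitely differentiable with `(−1)^n (dⁿ/dxⁿ) E_ν(−x) ≥ 0` for all
`n ≥ 0`, `x > 0`. -/
theorem mittagLeffler_completely_monotone (ν : ℝ) (hν : ν ∈ Set.Ioo (0:ℝ) 1) :
    ContDiffOn ℝ (⊤ : ℕ∞) (fun x : ℝ => mittagLeffler ν (-x)) (Set.Ioi 0) ∧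
    ∀ n : ℕ, ∀ x : ℝ, 0 < x →
      0 ≤ (-1 : ℝ) ^ n * iteratedDeriv n (fun x : ℝ => mittagLeffler ν (-x)) x := by
  obtain ⟨smooth, alternating⟩ :=
    mittagLeffler_completely_monotone_general ν (Ioo_subset_Ioc_self hν)
  exact ⟨smooth.contDiffOn, fun n x _ ↦ alternating n x⟩
end
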